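/- (Koebe theorem in metric spaces) Let X and Y be metric spaces satisfying assumptions (A), let Ω ⊊ X be a bounded domain satisfying the bounded turning condition, let D ⊊ Y be a bounded domain that is finitely connected at the boundary, and let f ∈ F(Ω, D). Then f has arcwise limits along all end-cuts of Ω: for every x ∈ ∂Ω and every end-cut γ : [0,1] → X of Ω from x, there exists x' ∈ ∂D such that f(γ(t)) → x' in Y as t → 1⁻. -/

import Mathlib

open Set Metric Filter Bornology
open scoped ENNReal Topology

noncomputable section

/-- A metric space is doubling if there is `N` such that every ball of radius `r`
can be covered by at most `N` balls of radius `r/2`. -/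
def DoublingSpace (X : Type*) [MetricSpace X] : Prop :=
  ∃ N : ℕ, ∀ (x : X) (r : ℝ), ∃ t : Finset X,
    t.card ≤ N ∧ Metric.ball x r ⊆ ⋃ y ∈ t, Metric.ball y (r / 2)

/-- A metric space is quasiconvex if there is `C ≥ 1` such that any two points are
joined by a rectifiable curve of length at most `C · d(x,y)`. -/
def QuasiconvexSpace (X : Type*) [MetricSpace X] : Prop :=
  ∃ C : ℝ, 1 ≤ C ∧ ∀ x y : X, ∃ γ : ℝ → X,
    ContinuousOn γ (Set.Icc 0 1) ∧ γ 0 = x ∧ γ 1 = y ∧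
    eVariationOn γ (Set.Icc 0 1) ≤ ENNReal.ofReal (C * dist x y)

/-- Assumptions (A): complete, doubling and quasiconvex. -/
def AssumptionsA (X : Type*) [MetricSpace X] : Prop :=
  CompleteSpace X ∧ DoublingSpace X ∧ QuasiconvexSpace X

/-- A domain: a nonempty open connected subset. -/
def IsDomainIn {X : Type*} [MetricSpace X] (Ω : Set X) : Prop :=
  IsOpen Ω ∧ IsConnected Ω

/-- The inner diameter distance `dist_{M'}` between `E, F ⊆ Ω`: the infimum of diameters of
rectifiable curves in `Ω` joining `E` and `F` (the infimum of the empty set being `∞`). -/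
def innerDiamDist {X : Type*} [MetricSpace X] (Ω E F : Set X) : ℝ≥0∞ :=
  ⨅ (γ : ℝ → X) (_ : ContinuousOn γ (Set.Icc 0 1) ∧ γ '' Set.Icc 0 1 ⊆ Ω ∧
      eVariationOn γ (Set.Icc 0 1) < ⊤ ∧ γ 0 ∈ E ∧ γ 1 ∈ F),
    EMetric.diam (γ '' Set.Icc 0 1)

/-- The Mazurkiewicz distance `dist_M` between `A, B ⊆ Ω`: the infimum of diameters of
connected subsets of `Ω` meeting both `A` and `B`. -/
def mazDist {X : Type*} [MetricSpace X] (Ω A B : Set X) : ℝ≥0∞ :=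
  ⨅ (K : Set X) (_ : K ⊆ Ω ∧ IsConnected K ∧ (K ∩ A).Nonempty ∧ (K ∩ B).Nonempty),
    EMetric.diam K

/-- An acceptable set in a bounded domain `Ω`: a bounded connected proper subset of `Ω`
whose closure meets `∂Ω`. -/
def AcceptableIn {X : Type*} [MetricSpace X] (Ω E : Set X) : Prop :=
  Bornology.IsBounded E ∧ IsConnected E ∧ E ⊆ Ω ∧ E ≠ Ω ∧
    (closure E ∩ frontier Ω).Nonempty

/-- A chain in `Ω`. -/
def IsChainIn {X : Type*} [MetricSpace X] (Ω : Set X) (E : ℕ → Set X) : Prop :=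
  (∀ k, AcceptableIn Ω (E k)) ∧
  (∀ k, E (k + 1) ⊆ E k) ∧
  (∀ k, 0 < mazDist Ω (Ω ∩ frontier (E (k + 1))) (Ω ∩ frontier (E k))) ∧
  (⋂ k, closure (E k)) ⊆ frontier Ω

/-- The impression of a chain. -/
def impression {X : Type*} [MetricSpace X] (E : ℕ → Set X) : Set X :=
  ⋂ k, closure (E k)

/-- A chain `E` divides a chain `F` if every member of `F` contains some member of `E`. -/
def ChainDivides {X : Type*} (E F : ℕ → Set X) : Prop :=
  ∀ k, ∃ l, E l ⊆ F k

/-- Two chains are equivalent if they divide each other. -/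
def ChainEquiv {X : Type*} (E F : ℕ → Set X) : Prop :=
  ChainDivides E F ∧ ChainDivides F E

/-- A chain represents a prime end if every chain dividing it is equivalent to it. -/
def IsPrimeChain {X : Type*} [MetricSpace X] (Ω : Set X) (E : ℕ → Set X) : Prop :=
  IsChainIn Ω E ∧ ∀ F : ℕ → Set X, IsChainIn Ω F → ChainDivides F E → ChainDivides E F

/-- A chain represents a singleton prime end if moreover its impression is a single point. -/
def IsSingletonPrimeChain {X : Type*} [MetricSpace X] (Ω : Set X) (E : ℕ → Set X) : Prop :=
  IsPrimeChain Ω E ∧ ∃ x : X, impression E = {x}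

/-- The bounded turning condition (linear connectedness): any two distinct points of `Ω` lie in a
continuum contained in `Ω` of diameter at most `L` times their distance. -/
def BoundedTurning {X : Type*} [MetricSpace X] (Ω : Set X) : Prop :=
  ∃ L : ℝ, 1 ≤ L ∧ ∀ x ∈ Ω, ∀ y ∈ Ω, x ≠ y → ∃ K : Set X,
    K ⊆ Ω ∧ IsCompact K ∧ IsConnected K ∧ K.Nontrivial ∧ x ∈ K ∧ y ∈ K ∧
    Metric.diam K ≤ L * dist x y

/-- `Ω` is finitely connected at a boundary point `x`. -/
def FinitelyConnectedAt {X : Type*} [MetricSpace X] (Ω : Set X) (x : X) : Prop :=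
  ∀ r : ℝ, 0 < r → ∃ U : Set X, IsOpen U ∧ Bornology.IsBounded U ∧ x ∈ U ∧
    U ⊆ Metric.ball x r ∧
    {C : Set X | ∃ y ∈ U ∩ Ω, C = connectedComponentIn (U ∩ Ω) y}.Finite

/-- `Ω` is finitely connected at the boundary. -/
def FinitelyConnectedAtBoundary {X : Type*} [MetricSpace X] (Ω : Set X) : Prop :=
  ∀ x ∈ frontier Ω, FinitelyConnectedAt Ω x

/-- `Ω` is locally connected at a boundary point `x`. -/
def LocallyConnectedAt {X : Type*} [MetricSpace X] (Ω : Set X) (x : X) : Prop :=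
  ∀ r : ℝ, 0 < r → ∃ U : Set X, IsOpen U ∧ Bornology.IsBounded U ∧ x ∈ U ∧
    U ⊆ Metric.ball x r ∧ IsConnected (U ∩ Ω)

/-- `Ω` is locally connected at the boundary. -/
def LocallyConnectedAtBoundary {X : Type*} [MetricSpace X] (Ω : Set X) : Prop :=
  ∀ x ∈ frontier Ω, LocallyConnectedAt Ω x

/-- `f` is a homeomorphism of `Ω` onto `Ω'` with inverse `g`. -/
def IsHomeoBetween {X Y : Type*} [MetricSpace X] [MetricSpace Y] (f : X → Y) (g : Y → X)
    (Ω : Set X) (Ω' : Set Y) : Prop :=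
  ContinuousOn f Ω ∧ ContinuousOn g Ω' ∧ Set.MapsTo f Ω Ω' ∧ Set.MapsTo g Ω' Ω ∧
  (∀ x ∈ Ω, g (f x) = x) ∧ (∀ y ∈ Ω', f (g y) = y)

/-- The class `F(Ω, Ω')`: homeomorphisms such that for all connected `E, F ⊊ Ω`,
`dist_{M'}(E,F) = 0` iff `dist_{M'}(f(E), f(F)) = 0`. -/
def ClassF {X Y : Type*} [MetricSpace X] [MetricSpace Y] (Ω : Set X) (Ω' : Set Y)
    (f : X → Y) (g : Y → X) : Prop :=
  IsHomeoBetween f g Ω Ω' ∧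
  ∀ E F : Set X, E ⊆ Ω → E ≠ Ω → IsConnected E → F ⊆ Ω → F ≠ Ω → IsConnected F →
    (innerDiamDist Ω E F = 0 ↔ innerDiamDist Ω' (f '' E) (f '' F) = 0)

/-- The cluster set `C(f, x)` of `f : Ω → Y` at `x`. -/
def clusterSetOn {X Y : Type*} [MetricSpace X] [MetricSpace Y] (f : X → Y) (Ω : Set X)
    (x : X) : Set Y :=
  ⋂ U ∈ 𝓝 x, closure (f '' (U ∩ Ω))


/-!
Bounded turning and quasiconvexity make the inner diameter distance at most a constant multiple of
the ambient distance, so two subsets of `Ω` whose closures share a point are at inner diameter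
distance `0`. Suppose that `f` had two cluster points `y ≠ y'` at a boundary point `x`. Finite
connectedness of `D` puts a connected piece of `D` near `y` and another near `y'`, each containing
values of `f` at points arbitrarily close to `x`. These pieces are at positive distance, while their
preimages accumulate at `x` and hence are at inner diameter distance `0`, against `f ∈ F(Ω, D)`. As
`closure D` is compact, `f` thus has a limit at `x` in `Ω`, and therefore along every end-cut.
-/

open scoped NNReal

section RectifiableCurves

variable {X : Type*} [PseudoEMetricSpace X] {γ η : ℝ → X} {φ : ℝ → ℝ} {s t : Set ℝ} {V W : Set X}
  {a b c : X}

/-- Restricted to the parameter set `s`, the map `γ` is a continuous curve in `V` of finite length.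
Leaving `s` free lets curves be reparametrized and concatenated. -/
structure IsRectifiableCurveOn (γ : ℝ → X) (s : Set ℝ) (V : Set X) : Prop where
  continuousOn : ContinuousOn γ s
  mapsTo : MapsTo γ s V
  boundedVariationOn : BoundedVariationOn γ s

namespace IsRectifiableCurveOn

theorem congr (h : IsRectifiableCurveOn γ s V) (hηγ : EqOn η γ s) : IsRectifiableCurveOn η s V where
  continuousOn := h.continuousOn.congr hηγ
  mapsTo := h.mapsTo.congr hηγ.symm
  boundedVariationOn := (eVariationOn.congr hηγ).trans_ne h.boundedVariationOn

theorem comp_monotoneOn (h : IsRectifiableCurveOn γ s V) (hφ : ContinuousOn φ t)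
    (hmono : MonotoneOn φ t) (hts : MapsTo φ t s) : IsRectifiableCurveOn (γ ∘ φ) t V where
  continuousOn := h.continuousOn.comp hφ hts
  mapsTo := h.mapsTo.comp hts
  boundedVariationOn :=
    ne_top_of_le_ne_top h.boundedVariationOn (eVariationOn.comp_le_of_monotoneOn γ φ hmono hts)

theorem comp_antitoneOn (h : IsRectifiableCurveOn γ s V) (hφ : ContinuousOn φ t)
    (hanti : AntitoneOn φ t) (hts : MapsTo φ t s) : IsRectifiableCurveOn (γ ∘ φ) t V where
  continuousOn := h.continuousOn.comp hφ hts
  mapsTo := h.mapsTo.comp hts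
  boundedVariationOn :=
    ne_top_of_le_ne_top h.boundedVariationOn (eVariationOn.comp_le_of_antitoneOn γ φ hanti hts)

theorem union_Icc {u v w : ℝ} (huv : u ≤ v) (hvw : v ≤ w)
    (h : IsRectifiableCurveOn γ (Icc u v) V) (h' : IsRectifiableCurveOn γ (Icc v w) V) :
    IsRectifiableCurveOn γ (Icc u w) V := by
  rw [← Icc_union_Icc_eq_Icc huv hvw]
  refine ⟨h.continuousOn.union_of_isClosed h'.continuousOn isClosed_Icc isClosed_Icc,
    h.mapsTo.union h'.mapsTo, ?_⟩
  rw [BoundedVariationOn, eVariationOn.union γ (isGreatest_Icc huv) (isLeast_Icc hvw)]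
  exact ENNReal.add_ne_top.2 ⟨h.boundedVariationOn, h'.boundedVariationOn⟩

end IsRectifiableCurveOn

/-- The points `a` and `b` are the endpoints of a rectifiable curve in `V`: the analogue of
`JoinedIn` for the curves over which `innerDiamDist` takes its infimum. -/
def RectifiablyJoinedIn (V : Set X) (a b : X) : Prop :=
  ∃ γ : ℝ → X, IsRectifiableCurveOn γ (Icc 0 1) V ∧ γ 0 = a ∧ γ 1 = b

namespace RectifiablyJoinedIn

theorem mono (h : RectifiablyJoinedIn V a b) (hVW : V ⊆ W) : RectifiablyJoinedIn W a b := by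
  obtain ⟨γ, hγ, h0, h1⟩ := h
  exact ⟨γ, ⟨hγ.continuousOn, hγ.mapsTo.mono_right hVW, hγ.boundedVariationOn⟩, h0, h1⟩

theorem symm (h : RectifiablyJoinedIn V a b) : RectifiablyJoinedIn V b a := by
  obtain ⟨γ, hγ, h0, h1⟩ := h
  refine ⟨γ ∘ fun t ↦ 1 - t, hγ.comp_antitoneOn (by fun_prop) ?_ ?_, by simpa using h1,
    by simpa using h0⟩
  · exact fun _ _ _ _ hst ↦ sub_le_sub_left hst 1
  · exact fun t ht ↦ ⟨sub_nonneg.2 ht.2, sub_le_self 1 ht.1⟩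

theorem trans (h : RectifiablyJoinedIn V a b) (h' : RectifiablyJoinedIn V b c) :
    RectifiablyJoinedIn V a c := by
  obtain ⟨γ, hγ, rfl, rfl⟩ := h
  obtain ⟨η, hη, hη0, rfl⟩ := h'
  let σ : ℝ → X := fun t ↦ if t ≤ 1 / 2 then γ (2 * t) else η (2 * t - 1)
  have hσγ : EqOn σ (γ ∘ fun t ↦ 2 * t) (Icc 0 (1 / 2)) := fun t ht ↦ if_pos ht.2
  have hση : EqOn σ (η ∘ fun t ↦ 2 * t - 1) (Icc (1 / 2) 1) := by
    intro t ht
    rcases ht.1.eq_or_lt with rfl | hlt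
    · simp [σ, hη0]
    · exact if_neg hlt.not_ge
  have left : IsRectifiableCurveOn σ (Icc 0 (1 / 2)) V :=
    (hγ.comp_monotoneOn (by fun_prop) (fun s _ t _ hst ↦ by simpa using hst)
      fun t ht ↦ ⟨by linarith [ht.1], by linarith [ht.2]⟩).congr hσγ
  have right : IsRectifiableCurveOn σ (Icc (1 / 2) 1) V :=
    (hη.comp_monotoneOn (by fun_prop) (fun s _ t _ hst ↦ by simpa using hst)
      fun t ht ↦ ⟨by linarith [ht.1], by linarith [ht.2]⟩).congr hση
  refine ⟨σ, left.union_Icc (by norm_num) (by norm_num) right, by simp [σ], ?_⟩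
  rw [hση ⟨by norm_num, le_rfl⟩]
  norm_num

end RectifiablyJoinedIn

end RectifiableCurves

section Quasiconvex

variable {X : Type*} [MetricSpace X] {K : Set X} {a b : X}

theorem QuasiconvexSpace.eventually_rectifiablyJoinedIn_ball (hX : QuasiconvexSpace X) (p : X)
    {δ : ℝ} (hδ : 0 < δ) : ∀ᶠ q in 𝓝 p, RectifiablyJoinedIn (ball p δ) p q := by
  obtain ⟨C, hC, hcurve⟩ := hX
  have hC0 : 0 < C := zero_lt_one.trans_le hC
  filter_upwards [ball_mem_nhds p (div_pos hδ hC0)] with q hq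
  obtain ⟨γ, hγ, h0, h1, hlength⟩ := hcurve p q
  refine ⟨γ, ⟨hγ, fun t ht ↦ ?_, ne_top_of_le_ne_top ENNReal.ofReal_ne_top hlength⟩, h0, h1⟩
  have hedist : edist (γ t) (γ 0) ≤ ENNReal.ofReal (C * dist p q) :=
    (eVariationOn.edist_le γ ht (left_mem_Icc.2 zero_le_one)).trans hlength
  rw [h0] at hedist
  calc dist (γ t) p ≤ C * dist p q := (edist_le_ofReal (by positivity)).1 hedist
    _ < δ := by rwa [mul_comm, dist_comm, ← lt_div_iff₀ hC0]

theorem QuasiconvexSpace.rectifiablyJoinedIn_thickening (hX : QuasiconvexSpace X)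
    (hK : IsPreconnected K) {δ : ℝ} (hδ : 0 < δ) (ha : a ∈ K) (hb : b ∈ K) :
    RectifiablyJoinedIn (thickening δ K) a b := by
  refine hK.induction₂ (RectifiablyJoinedIn (thickening δ K)) (fun p hp ↦ ?_)
    (fun _ _ _ _ _ _ h h' ↦ h.trans h') (fun _ _ _ _ h ↦ h.symm) ha hb
  exact nhdsWithin_le_nhds ((hX.eventually_rectifiablyJoinedIn_ball p hδ).mono
    fun q hq ↦ hq.mono (ball_subset_thickening hp δ))

end Quasiconvex

section InnerDiamDist

variable {X : Type*} [MetricSpace X] {V E E' F F' Ω K : Set X} {a b x : X}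

theorem innerDiamDist_anti (hE : E ⊆ E') (hF : F ⊆ F') :
    innerDiamDist Ω E' F' ≤ innerDiamDist Ω E F :=
  le_iInf₂ fun γ ⟨hγ, hγΩ, hlength, h0, h1⟩ ↦ iInf₂_le γ ⟨hγ, hγΩ, hlength, hE h0, hF h1⟩

theorem le_innerDiamDist {r : ℝ≥0∞} (h : ∀ a ∈ E, ∀ b ∈ F, r ≤ edist a b) :
    r ≤ innerDiamDist Ω E F :=
  le_iInf₂ fun γ ⟨_, _, _, h0, h1⟩ ↦ (h _ h0 _ h1).trans <| edist_le_ediam_of_mem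
    (mem_image_of_mem γ (left_mem_Icc.2 zero_le_one))
    (mem_image_of_mem γ (right_mem_Icc.2 zero_le_one))

theorem innerDiamDist_ne_zero_of_areSeparated (h : AreSeparated E F) : innerDiamDist Ω E F ≠ 0 := by
  obtain ⟨r, hr, hEF⟩ := h
  exact ((pos_iff_ne_zero.2 hr).trans_le (le_innerDiamDist hEF)).ne'

theorem RectifiablyJoinedIn.innerDiamDist_le_ediam (h : RectifiablyJoinedIn V a b) (hV : V ⊆ Ω)
    (ha : a ∈ E) (hb : b ∈ F) : innerDiamDist Ω E F ≤ ediam V := by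
  obtain ⟨γ, hγ, rfl, rfl⟩ := h
  have hγV : γ '' Icc 0 1 ⊆ V := hγ.mapsTo.image_subset
  exact (iInf₂_le γ ⟨hγ.continuousOn, hγV.trans hV, hγ.boundedVariationOn.lt_top, ha, hb⟩).trans
    (ediam_mono hγV)

theorem QuasiconvexSpace.innerDiamDist_le_ediam (hX : QuasiconvexSpace X) (hΩ : IsOpen Ω)
    (hKc : IsCompact K) (hK : IsPreconnected K) (hKΩ : K ⊆ Ω) (ha : a ∈ K ∩ E) (hb : b ∈ K ∩ F) :
    innerDiamDist Ω E F ≤ ediam K := by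
  obtain ⟨δ, hδ, hδΩ⟩ := hKc.exists_thickening_subset_open hΩ hKΩ
  lift δ to ℝ≥0 using hδ.le
  refine ENNReal.le_of_forall_pos_le_add fun ε hε _ ↦ ?_
  set ρ : ℝ≥0 := min δ (ε / 2)
  have hρ : 0 < ρ := lt_min (mod_cast hδ) (half_pos hε)
  have hρΩ : thickening ρ K ⊆ Ω := (thickening_mono (mod_cast min_le_left _ _) K).trans hδΩ
  calc innerDiamDist Ω E F
    _ ≤ ediam (thickening ρ K) :=
      (hX.rectifiablyJoinedIn_thickening hK hρ ha.1 hb.1).innerDiamDist_le_ediam hρΩ ha.2 hb.2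
    _ ≤ ediam K + 2 * ρ := ediam_thickening_le ρ
    _ ≤ ediam K + ε := by
      gcongr
      exact_mod_cast (le_div_iff₀' zero_lt_two).1 (min_le_right δ (ε / 2))

theorem BoundedTurning.exists_innerDiamDist_singleton_le (hΩbt : BoundedTurning Ω)
    (hX : QuasiconvexSpace X) (hΩ : IsOpen Ω) :
    ∃ L : ℝ≥0, ∀ a ∈ Ω, ∀ b ∈ Ω, innerDiamDist Ω {a} {b} ≤ L * edist a b := by
  obtain ⟨L, hL, hcontinuum⟩ := hΩbt
  lift L to ℝ≥0 using zero_le_one.trans hL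
  refine ⟨L, fun a ha b hb ↦ ?_⟩
  rcases eq_or_ne a b with rfl | hab
  · simpa using hX.innerDiamDist_le_ediam hΩ isCompact_singleton isPreconnected_singleton
      (singleton_subset_iff.2 ha) (E := {a}) (F := {a})
      ⟨mem_singleton a, rfl⟩ ⟨mem_singleton a, rfl⟩
  obtain ⟨K, hKΩ, hKc, hK, -, haK, hbK, hdiam⟩ := hcontinuum a ha b hb hab
  calc innerDiamDist Ω {a} {b}
    _ ≤ ediam K := hX.innerDiamDist_le_ediam hΩ hKc hK.isPreconnected hKΩ ⟨haK, rfl⟩ ⟨hbK, rfl⟩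
    _ = ENNReal.ofReal (diam K) := (ENNReal.ofReal_toReal hKc.isBounded.ediam_ne_top).symm
    _ ≤ ENNReal.ofReal (L * dist a b) := ENNReal.ofReal_le_ofReal hdiam
    _ = L * edist a b := by
      rw [ENNReal.ofReal_mul L.coe_nonneg, ENNReal.ofReal_coe_nnreal, edist_dist]

theorem BoundedTurning.innerDiamDist_eq_zero (hΩbt : BoundedTurning Ω) (hX : QuasiconvexSpace X)
    (hΩ : IsOpen Ω) (hE : E ⊆ Ω) (hF : F ⊆ Ω) (hxE : x ∈ closure E) (hxF : x ∈ closure F) :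
    innerDiamDist Ω E F = 0 := by
  obtain ⟨L, hL⟩ := hΩbt.exists_innerDiamDist_singleton_le hX hΩ
  have := mem_closure_iff_nhdsWithin_neBot.1 hxE
  have := mem_closure_iff_nhdsWithin_neBot.1 hxF
  have hlim : Tendsto (fun p : X × X ↦ L * edist p.1 p.2) (𝓝[E] x ×ˢ 𝓝[F] x) (𝓝 0) := by
    have hcont : Continuous fun p : X × X ↦ L * edist p.1 p.2 :=
      (ENNReal.continuous_const_mul ENNReal.coe_ne_top).comp continuous_edist
    have h := hcont.tendsto (x, x)
    rw [edist_self, mul_zero, nhds_prod_eq] at h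
    exact h.mono_left (prod_mono nhdsWithin_le_nhds nhdsWithin_le_nhds)
  refine nonpos_iff_eq_zero.1 (ge_of_tendsto hlim ?_)
  filter_upwards [prod_mem_prod self_mem_nhdsWithin self_mem_nhdsWithin] with ⟨a, b⟩ ⟨ha, hb⟩
  exact (innerDiamDist_anti (singleton_subset_iff.2 ha) (singleton_subset_iff.2 hb)).trans
    (hL a (hE ha) b (hF hb))

end InnerDiamDist

section Doubling

variable {Y : Type*} [MetricSpace Y] {D : Set Y}

theorem DoublingSpace.exists_finite_ball_subset_iUnion_ball (hY : DoublingSpace Y) (p : Y) (R : ℝ)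
    (n : ℕ) : ∃ t : Set Y, t.Finite ∧ ball p R ⊆ ⋃ y ∈ t, ball y (R / 2 ^ n) := by
  obtain ⟨N, hN⟩ := hY
  choose u _ hu using fun y r ↦ hN y r
  induction n with
  | zero => exact ⟨{p}, finite_singleton p, by simp⟩
  | succ n ih =>
    obtain ⟨t, ht, hcover⟩ := ih
    refine ⟨⋃ y ∈ t, u y (R / 2 ^ n), ht.biUnion fun y _ ↦ (u y _).finite_toSet, ?_⟩
    simp only [biUnion_iUnion, pow_succ, ← div_div]
    exact hcover.trans (iUnion₂_mono fun y _ ↦ hu y _)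

theorem DoublingSpace.totallyBounded (hY : DoublingSpace Y) (hD : IsBounded D) :
    TotallyBounded D := by
  rcases D.eq_empty_or_nonempty with rfl | ⟨p, -⟩
  · exact totallyBounded_empty
  obtain ⟨R, hR⟩ := hD.subset_ball p
  refine totallyBounded_iff.2 fun ε hε ↦ ?_
  obtain ⟨n, hn⟩ := pow_unbounded_of_one_lt (R / ε) one_lt_two
  have hRn : R / 2 ^ n ≤ ε := (div_le_comm₀ (by positivity) hε).2 hn.le
  obtain ⟨t, ht, hcover⟩ := hY.exists_finite_ball_subset_iUnion_ball p R n
  exact ⟨t, ht, hR.trans <| hcover.trans <| iUnion₂_mono fun y _ ↦ ball_subset_ball hRn⟩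

theorem DoublingSpace.isCompact_closure [CompleteSpace Y] (hY : DoublingSpace Y)
    (hD : IsBounded D) : IsCompact (closure D) :=
  (hY.totallyBounded hD).closure.isCompact_of_isClosed isClosed_closure

end Doubling

section Homeomorphisms

variable {X Y : Type*} [MetricSpace X] [MetricSpace Y] {Ω : Set X} {D : Set Y} {f : X → Y}
  {g : Y → X}

theorem IsHomeoBetween.symm (h : IsHomeoBetween f g Ω D) : IsHomeoBetween g f D Ω := by
  obtain ⟨hf, hg, hfD, hgΩ, hgf, hfg⟩ := h
  exact ⟨hg, hf, hgΩ, hfD, hfg, hgf⟩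

theorem IsHomeoBetween.image_ssubset (h : IsHomeoBetween f g Ω D) {E : Set X} (hE : E ⊂ Ω) :
    f '' E ⊂ D := by
  obtain ⟨-, -, hfD, hgΩ, hgf, -⟩ := h
  refine ((hfD.mono_left hE.subset).image_subset).ssubset_of_ne fun hED ↦ hE.ne ?_
  rw [← LeftInvOn.image_image' hgf hE.subset, hED]
  exact (LeftInvOn.surjOn hgf hfD).image_eq_of_mapsTo hgΩ

theorem ClassF.symm (hf : ClassF Ω D f g) : ClassF D Ω g f := by
  obtain ⟨hhomeo, hzero⟩ := hf
  refine ⟨hhomeo.symm, fun A B hA hAne hAc hB hBne hBc ↦ ?_⟩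
  have hgA := hhomeo.symm.image_ssubset (hA.ssubset_of_ne hAne)
  have hgB := hhomeo.symm.image_ssubset (hB.ssubset_of_ne hBne)
  obtain ⟨-, hg, -, -, -, hfg⟩ := hhomeo
  have h := hzero _ _ hgA.subset hgA.ne (hAc.image g (hg.mono hA)) hgB.subset hgB.ne
    (hBc.image g (hg.mono hB))
  rwa [LeftInvOn.image_image' hfg hA, LeftInvOn.image_image' hfg hB, Iff.comm] at h

end Homeomorphisms

section ClusterPoints

theorem areSeparated_ball_ball {Y : Type*} [PseudoMetricSpace Y] {y y' : Y} {r s : ℝ}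
    (h : r + s < dist y y') : AreSeparated (ball y r) (ball y' s) := by
  refine ⟨ENNReal.ofReal (dist y y' - (r + s)), (ENNReal.ofReal_pos.2 (sub_pos.2 h)).ne',
    fun a ha b hb ↦ ?_⟩
  rw [edist_dist]
  refine ENNReal.ofReal_le_ofReal ?_
  linarith [dist_triangle4 y a b y', mem_ball'.1 ha, mem_ball.1 hb]

theorem mem_frontier_of_mapClusterPt {X Y : Type*} [TopologicalSpace X] [T2Space X]
    [TopologicalSpace Y] {Ω : Set X} {D : Set Y} {f : X → Y} {g : Y → X} {x : X} {y : Y}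
    (hD : IsOpen D) (hg : ContinuousOn g D) (hgΩ : MapsTo g D Ω) (hfD : MapsTo f Ω D)
    (hgf : LeftInvOn g f Ω) (hx : x ∉ Ω) (hy : MapClusterPt y (𝓝[Ω] x) f) : y ∈ frontier D := by
  rw [hD.frontier_eq]
  refine ⟨isClosed_closure.mem_of_mapClusterPt hy ?_, fun hyD ↦ hx ?_⟩
  · filter_upwards [self_mem_nhdsWithin] with z hz using subset_closure (hfD hz)
  have hgy : MapClusterPt (g y) (𝓝[Ω] x) (g ∘ f) :=
    hy.continuousAt_comp (hg.continuousAt (hD.mem_nhds hyD))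
  have hgf_lim : Tendsto (g ∘ f) (𝓝[Ω] x) (𝓝 x) :=
    (tendsto_id'.2 nhdsWithin_le_nhds).congr' <|
      eventually_mem_nhdsWithin.mono fun z hz ↦ (hgf hz).symm
  have : NeBot (𝓝 (g y) ⊓ 𝓝 x) := hgy.clusterPt.mono hgf_lim
  exact eq_of_nhds_neBot this ▸ hgΩ hyD

variable {X Y : Type*} [MetricSpace X] [MetricSpace Y] {Ω : Set X} {D : Set Y} {f : X → Y}
  {g : Y → X} {x : X} {y y' : Y}

theorem FinitelyConnectedAt.exists_isConnected_frequently_mem (hD : FinitelyConnectedAt D y)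
    {ι : Type*} {l : Filter ι} {u : ι → Y} (hy : MapClusterPt y l u) (hu : ∀ᶠ i in l, u i ∈ D)
    {r : ℝ} (hr : 0 < r) :
    ∃ C ⊆ D, C ⊆ ball y r ∧ IsConnected C ∧ ∃ᶠ i in l, u i ∈ C := by
  obtain ⟨U, hU, -, hyU, hUr, hfin⟩ := hD r hr
  have hUD : ∃ᶠ i in l, u i ∈ U ∩ D := (hy.frequently (hU.mem_nhds hyU)).and_eventually hu
  obtain ⟨_, ⟨c, hc, rfl⟩, hfreq⟩ := (hfin.frequently_exists (p := fun C i ↦ u i ∈ C)).1 <|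
    hUD.mono fun i hi ↦ ⟨_, ⟨u i, hi, rfl⟩, mem_connectedComponentIn hi⟩
  have hsub := connectedComponentIn_subset (U ∩ D) c
  exact ⟨_, fun z hz ↦ (hsub hz).2, fun z hz ↦ hUr (hsub hz).1,
    isConnected_connectedComponentIn_iff.2 hc, hfreq⟩

theorem FinitelyConnectedAt.exists_isConnected_mem_closure_image (hD : FinitelyConnectedAt D y)
    (hfD : MapsTo f Ω D) (hgf : LeftInvOn g f Ω) (hy : MapClusterPt y (𝓝[Ω] x) f)
    {r : ℝ} (hr : 0 < r) :
    ∃ C ⊆ D, C ⊆ ball y r ∧ IsConnected C ∧ x ∈ closure (g '' C) := by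
  obtain ⟨C, hCD, hCr, hC, hfreq⟩ := hD.exists_isConnected_frequently_mem hy
    (eventually_mem_nhdsWithin.mono hfD) hr
  refine ⟨C, hCD, hCr, hC, mem_closure_iff_frequently.2 ?_⟩
  exact (frequently_nhdsWithin_iff.1 hfreq).mono fun z hz ↦ ⟨f z, hz.1, hgf hz.2⟩

theorem eq_of_mapClusterPt (hX : QuasiconvexSpace X) (hΩ : IsOpen Ω) (hΩbt : BoundedTurning Ω)
    (hgΩ : MapsTo g D Ω) (hfD : MapsTo f Ω D) (hgf : LeftInvOn g f Ω)
    (hzero : ∀ A B : Set Y, A ⊂ D → IsConnected A → B ⊂ D → IsConnected B →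
      innerDiamDist Ω (g '' A) (g '' B) = 0 → innerDiamDist D A B = 0)
    (hDy : FinitelyConnectedAt D y) (hDy' : FinitelyConnectedAt D y')
    (hy : MapClusterPt y (𝓝[Ω] x) f) (hy' : MapClusterPt y' (𝓝[Ω] x) f) : y = y' := by
  by_contra hne
  have hd : 0 < dist y y' := dist_pos.2 hne
  have hr : 0 < dist y y' / 3 := by positivity
  obtain ⟨A, hAD, hAy, hA, hxA⟩ := hDy.exists_isConnected_mem_closure_image hfD hgf hy hr
  obtain ⟨B, hBD, hBy', hB, hxB⟩ := hDy'.exists_isConnected_mem_closure_image hfD hgf hy' hr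
  have hsep : AreSeparated A B :=
    (areSeparated_ball_ball (by linarith)).mono hAy hBy'
  have hAD' : A ⊂ D := hAD.ssubset_of_mem_notMem (hBD hB.nonempty.some_mem)
    fun h ↦ disjoint_left.1 hsep.disjoint h hB.nonempty.some_mem
  have hBD' : B ⊂ D := hBD.ssubset_of_mem_notMem (hAD hA.nonempty.some_mem)
    (disjoint_left.1 hsep.disjoint hA.nonempty.some_mem)
  refine innerDiamDist_ne_zero_of_areSeparated hsep (hzero A B hAD' hA hBD' hB ?_)
  exact hΩbt.innerDiamDist_eq_zero hX hΩ (hgΩ.mono_left hAD).image_subset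
    (hgΩ.mono_left hBD).image_subset hxA hxB

theorem statement_11_general (hX : QuasiconvexSpace X) (hΩ : IsOpen Ω) (hΩbt : BoundedTurning Ω)
    (hD : IsOpen D) (hDc : IsCompact (closure D)) (hDfc : FinitelyConnectedAtBoundary D)
    (hg : ContinuousOn g D) (hgΩ : MapsTo g D Ω) (hfD : MapsTo f Ω D) (hgf : LeftInvOn g f Ω)
    (hzero : ∀ A B : Set Y, A ⊂ D → IsConnected A → B ⊂ D → IsConnected B →
      innerDiamDist Ω (g '' A) (g '' B) = 0 → innerDiamDist D A B = 0)
    (hx : x ∈ frontier Ω) :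
    ∃ x' ∈ frontier D, Tendsto f (𝓝[Ω] x) (𝓝 x') := by
  rw [hΩ.frontier_eq] at hx
  have := mem_closure_iff_nhdsWithin_neBot.1 hx.1
  have hfclosure : ∀ᶠ z in 𝓝[Ω] x, f z ∈ closure D :=
    eventually_mem_nhdsWithin.mono fun z hz ↦ subset_closure (hfD hz)
  have hfrontier : ∀ y, MapClusterPt y (𝓝[Ω] x) f → y ∈ frontier D :=
    fun y ↦ mem_frontier_of_mapClusterPt hD hg hgΩ hfD hgf hx.2
  obtain ⟨x', -, hx'⟩ := hDc.exists_mapClusterPt (tendsto_principal.2 hfclosure)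
  refine ⟨x', hfrontier x' hx', hDc.tendsto_nhds_of_unique_mapClusterPt hfclosure fun y _ hy ↦ ?_⟩
  exact eq_of_mapClusterPt hX hΩ hΩbt hgΩ hfD hgf hzero (hDfc y (hfrontier y hy))
    (hDfc x' (hfrontier x' hx')) hy hx'

end ClusterPoints

/-- Koebe theorem in metric spaces: a map `f ∈ F(Ω, D)` between a bounded
turning domain `Ω` and a domain `D` finitely connected at the boundary has arcwise limits
along all end-cuts of `Ω`. -/
theorem statement_11 {X Y : Type*} [MetricSpace X] [MetricSpace Y]
    (hX : AssumptionsA X) (hY : AssumptionsA Y)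
    (Ω : Set X) (hΩdom : IsDomainIn Ω) (hΩbdd : Bornology.IsBounded Ω)
    (hΩne : Ω ≠ Set.univ) (hΩbt : BoundedTurning Ω)
    (D : Set Y) (hDdom : IsDomainIn D) (hDbdd : Bornology.IsBounded D)
    (hDne : D ≠ Set.univ) (hDfc : FinitelyConnectedAtBoundary D)
    (f : X → Y) (g : Y → X) (hf : ClassF Ω D f g)
    (x : X) (hx : x ∈ frontier Ω)
    (γ : ℝ → X) (hγcont : ContinuousOn γ (Set.Icc 0 1))
    (hγΩ : γ '' Set.Ico 0 1 ⊆ Ω) (hγ1 : γ 1 = x) :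
    ∃ x' ∈ frontier D,
      Filter.Tendsto (fun t => f (γ t)) (𝓝[Set.Ico 0 1] 1) (𝓝 x') := by
  subst hγ1
  have := hY.1
  have hγlim : Tendsto γ (𝓝[Ico 0 1] 1) (𝓝[Ω] (γ 1)) :=
    ((hγcont 1 (right_mem_Icc.2 zero_le_one)).mono Ico_subset_Icc_self).tendsto_nhdsWithin
      (mapsTo_iff_image_subset.2 hγΩ)
  obtain ⟨-, hg, hfD, hgΩ, hgf, -⟩ := hf.1
  obtain ⟨x', hx', hlim⟩ := statement_11_general hX.2.2 hΩdom.1 hΩbt hDdom.1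
    (hY.2.1.isCompact_closure hDbdd) hDfc hg hgΩ hfD hgf
    (fun A B hA hAc hB hBc ↦ (hf.symm.2 A B hA.subset hA.ne hAc hB.subset hB.ne hBc).2) hx
  exact ⟨x', hx', hlim.comp hγlim⟩
end
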